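/- Let α ∈ S_n be a quasi-diagram with an isolated point i, and let δ_i(α) ∈ S_{n−1} be its i-contraction. Then the orbits of ζ_{n−1}·δ_i(α) on {1,…,n−1} are exactly the sets (ϑ_{i,n})^{−1}(O) for the orbits O of ζ_n·α with i ∉ O, together with (ϑ_{i,n})^{−1}(O₀) ∖ {n}, where O₀ is the orbit of ζ_n·α containing i. In particular, δ_i(α) has the same number of faces as α. -/

import Mathlib

/-- The cycle `ϑ_{i,n} = (i, i+1, …, n)` of `S_n`; here `S_n` is realized as the permutations
of `Fin (m+1)` (with `n = m+1`), 0-indexed, and `a : Fin (m+1)` corresponds to `i`. -/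
def vartheta {m : ℕ} (a : Fin (m + 1)) : Equiv.Perm (Fin (m + 1)) :=
  Fin.revPerm * (Fin.cycleRange a.rev)⁻¹ * Fin.revPerm

/-- A permutation of `Fin m` regarded as a permutation of `Fin (m+1)` fixing the last point. -/
def castPerm {m : ℕ} (β : Equiv.Perm (Fin m)) : Equiv.Perm (Fin (m + 1)) :=
  β.viaFintypeEmbedding Fin.castSuccEmb

/-- `ω` is an orbit of the permutation `σ`. -/
def IsOrbit {m : ℕ} (σ : Equiv.Perm (Fin m)) (ω : Set (Fin m)) : Prop :=
  ∃ x : Fin m, ω = {y | σ.SameCycle x y}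

theorem vartheta_last {m : ℕ} (a : Fin (m + 1)) : vartheta a (Fin.last m) = a := by
  simp [vartheta, Equiv.Perm.inv_def]

theorem vartheta_castSucc {m : ℕ} (a : Fin (m + 1)) (j : Fin m) :
    vartheta a (Fin.castSucc j) = a.succAbove j := by
  simp only [vartheta, Equiv.Perm.coe_mul, Function.comp, Fin.revPerm_apply, Equiv.Perm.inv_def,
    Fin.rev_castSucc, Fin.cycleRange_symm_succ, Fin.rev_succAbove, Fin.rev_rev]

theorem rotate_step {k : ℕ} (a : Fin (k + 2)) (y : Fin (k + 1)) :
    a.succAbove (finRotate (k + 1) y) =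
      if finRotate (k + 2) (a.succAbove y) = a then finRotate (k + 2) a
      else finRotate (k + 2) (a.succAbove y) := by
  have h1 := coe_finRotate y
  have h2 := coe_finRotate a
  have h3 := coe_finRotate (a.succAbove y)
  have ha := a.isLt
  have hy := y.isLt
  split_ifs with h
  all_goals
    simp only [Fin.ext_iff, Fin.succAbove, Fin.lt_def, Fin.val_last] at *
    split_ifs at * <;> simp_all <;> omega

section
variable {n : ℕ} {σ : Equiv.Perm (Fin n)} {τ : Equiv.Perm (Fin (n + 1))} {a : Fin (n + 1)}

theorem sameCycle_iff_of_step
    (h : ∀ x, a.succAbove (σ x) = if τ (a.succAbove x) = a then τ a else τ (a.succAbove x))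
    (x y : Fin n) : σ.SameCycle x y ↔ τ.SameCycle (a.succAbove x) (a.succAbove y) := by
  constructor
  · intro hxy
    obtain ⟨k, -, hk⟩ := hxy.exists_pow_eq'
    clear hxy
    induction k generalizing y with
    | zero => 
      simp only [pow_zero, Equiv.Perm.coe_one, id] at hk
      subst hk; exact Equiv.Perm.SameCycle.refl _ _
    | succ k ih =>
      rw [pow_succ', Equiv.Perm.mul_apply] at hk
      refine (ih _ rfl).trans ?_
      rw [← hk, h]
      split_ifs with h'
      · have : τ a = τ (τ (a.succAbove ((σ ^ k) x))) := by rw [h']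
        rw [this, Equiv.Perm.sameCycle_apply_right, Equiv.Perm.sameCycle_apply_right]
      · rw [Equiv.Perm.sameCycle_apply_right]
  · intro hxy
    obtain ⟨k, -, hk⟩ := hxy.exists_pow_eq'
    clear hxy
    induction k using Nat.strong_induction_on generalizing x with
    | _ k ih =>
    match k, ih, hk with
    | 0, _, hk =>
      simp only [pow_zero, Equiv.Perm.coe_one, id] at hk
      rw [Fin.succAbove_right_injective hk]
    | k + 1, ih, hk =>
      rw [pow_succ, Equiv.Perm.mul_apply] at hk
      have hx := h x
      rw [← Equiv.Perm.sameCycle_apply_left]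
      by_cases h' : τ (a.succAbove x) = a
      · rw [if_pos h'] at hx
        rw [h'] at hk
        match k, ih, hk with
        | 0, _, hk =>
          exact absurd hk.symm (Fin.succAbove_ne a y)
        | k + 1, ih, hk =>
          rw [pow_succ, Equiv.Perm.mul_apply, ← hx] at hk
          exact ih k (by omega) _ hk
      · rw [if_neg h'] at hx
        rw [← hx] at hk
        exact ih k (by omega) _ hk

theorem isOrbit_iff_exists
    (h : ∀ x, a.succAbove (σ x) = if τ (a.succAbove x) = a then τ a else τ (a.succAbove x))
    (hτ : τ a ≠ a) (ω : Set (Fin n)) :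
    IsOrbit σ ω ↔ ∃ O, IsOrbit τ O ∧ a.succAbove ⁻¹' O = ω := by
  constructor
  · rintro ⟨x, rfl⟩
    refine ⟨_, ⟨a.succAbove x, rfl⟩, ?_⟩
    ext y
    exact (sameCycle_iff_of_step h x y).symm
  · rintro ⟨O, ⟨z, rfl⟩, rfl⟩
    obtain ⟨x, hx⟩ : ∃ x, τ.SameCycle z (a.succAbove x) := by
      by_cases hz : z = a
      · obtain ⟨x, hx⟩ := Fin.exists_succAbove_eq hτ
        exact ⟨x, by rw [hx, hz, Equiv.Perm.sameCycle_apply_right]⟩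
      · obtain ⟨x, hx⟩ := Fin.exists_succAbove_eq hz
        exact ⟨x, by rw [hx]⟩
    refine ⟨x, ?_⟩
    ext y
    simp only [Set.mem_preimage, Set.mem_setOf_eq]
    rw [sameCycle_iff_of_step h]
    exact ⟨fun g => hx.symm.trans g, fun g => hx.trans g⟩

theorem preimage_injOn (hτ : τ a ≠ a) :
    Set.InjOn (fun O : Set (Fin (n + 1)) => a.succAbove ⁻¹' O) {O | IsOrbit τ O} := by
  rintro _ ⟨z, rfl⟩ _ ⟨w, rfl⟩ hzw
  obtain ⟨x, hx⟩ : ∃ x, τ.SameCycle z (a.succAbove x) := by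
    by_cases hz : z = a
    · obtain ⟨x, hx⟩ := Fin.exists_succAbove_eq hτ
      exact ⟨x, by rw [hx, hz, Equiv.Perm.sameCycle_apply_right]⟩
    · obtain ⟨x, hx⟩ := Fin.exists_succAbove_eq hz
      exact ⟨x, by rw [hx]⟩
  have hw : τ.SameCycle w (a.succAbove x) := by
    have : x ∈ a.succAbove ⁻¹' {y | τ.SameCycle w y} := by
      have hzw2 : a.succAbove ⁻¹' {y | τ.SameCycle z y} =
          a.succAbove ⁻¹' {y | τ.SameCycle w y} := hzw
      rw [← hzw2]; exact hx
    exact this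
  have hzw' := hx.trans hw.symm
  ext y
  exact ⟨fun g => hzw'.symm.trans g, fun g => hzw'.trans g⟩

theorem image_castSucc_eq_iff (ω : Set (Fin n)) (T : Set (Fin (n + 1))) :
    Fin.castSucc '' ω = ⇑(vartheta a)⁻¹ '' T ↔ a.succAbove '' ω = T := by
  have h1 : a.succAbove '' ω = vartheta a '' (Fin.castSucc '' ω) := by
    rw [Set.image_image]; simp only [vartheta_castSucc]
  rw [h1, ← (vartheta a).injective.image_injective.eq_iff, Set.image_image _ _ T]
  simp

theorem image_succAbove_eq_iff (ω : Set (Fin n)) (O : Set (Fin (n + 1))) :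
    a.succAbove '' ω = O \ {a} ↔ a.succAbove ⁻¹' O = ω := by
  have h1 : O \ {a} = a.succAbove '' (a.succAbove ⁻¹' O) := by
    rw [Set.image_preimage_eq_inter_range, Fin.range_succAbove, Set.diff_eq]
  rw [h1, Fin.succAbove_right_injective.image_injective.eq_iff, eq_comm]

end



/-- Let `α ∈ S_{n}` (here `S_{n+1}`, permutations of `Fin (n+1)`, `n ≥ 1`,
so the NL size is `≥ 2`) be a quasi-diagram with an isolated point `a`, and let `β = δ_a(α)`
be its contraction, i.e. the permutation of `Fin n` whose extension fixing the last point is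
`ϑ⁻¹ α ϑ` (`ϑ = vartheta a`).  Then the orbits of `ζ_{n} β` are exactly the sets `ϑ⁻¹(O)` for
orbits `O` of `ζ_{n+1} α` with `a ∉ O`, together with `ϑ⁻¹(O₀) \ {last}` where `O₀` is the
orbit containing `a`.  In particular `β` has the same number of faces as `α`. -/
theorem stmt_12 (n : ℕ) (hn : 0 < n) (α : Equiv.Perm (Fin (n + 1)))
    (hα : ∀ x, α (α x) = x) (a : Fin (n + 1)) (ha : α a = a)
    (β : Equiv.Perm (Fin n))
    (hβ : castPerm β = (vartheta a)⁻¹ * α * vartheta a) :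
    (∀ ω : Set (Fin n),
      IsOrbit (finRotate n * β) ω ↔
        ((∃ O : Set (Fin (n + 1)), IsOrbit (finRotate (n + 1) * α) O ∧ a ∉ O ∧
            Fin.castSucc '' ω = ⇑(vartheta a)⁻¹ '' O) ∨
          Fin.castSucc '' ω =
            (⇑(vartheta a)⁻¹ '' {y | (finRotate (n + 1) * α).SameCycle a y}) \
              {Fin.last n})) ∧
    {ω : Set (Fin n) | IsOrbit (finRotate n * β) ω}.ncard =
      {O : Set (Fin (n + 1)) | IsOrbit (finRotate (n + 1) * α) O}.ncard := by

  obtain ⟨k, rfl⟩ : ∃ k, n = k + 1 := ⟨n - 1, by omega⟩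
  have hstep : ∀ x, a.succAbove ((finRotate (k + 1) * β) x) =
      if (finRotate (k + 1 + 1) * α) (a.succAbove x) = a then (finRotate (k + 1 + 1) * α) a
      else (finRotate (k + 1 + 1) * α) (a.succAbove x) := by
    intro x
    have h1 : a.succAbove (β x) = α (a.succAbove x) := by
      have h2 := congrArg (fun p => vartheta a (p (Fin.castSucc x))) hβ
      have h3 : castPerm β (Fin.castSucc x) = Fin.castSucc (β x) :=
        Equiv.Perm.viaFintypeEmbedding_apply_image β Fin.castSuccEmb x
      simpa [h3, vartheta_castSucc] using h2
    simp only [Equiv.Perm.mul_apply, ha, ← h1]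
    exact rotate_step a (β x)
  have hτ : (finRotate (k + 1 + 1) * α) a ≠ a := by
    rw [Equiv.Perm.mul_apply, ha]
    intro h
    have h2 := coe_finRotate a
    rw [h] at h2
    split_ifs at h2 with h3
    · rw [h3] at h2; simp at h2
    · omega
  generalize finRotate (k + 1 + 1) * α = τ at *
  generalize finRotate (k + 1) * β = σ at *
  constructor
  · intro ω
    have hlast : (⇑(vartheta a)⁻¹ '' {y | τ.SameCycle a y}) \ {Fin.last (k + 1)} =
        ⇑(vartheta a)⁻¹ '' ({y | τ.SameCycle a y} \ {a}) := by
      rw [Set.image_diff (Equiv.injective _), Set.image_singleton]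
      congr 2
      rw [Equiv.Perm.eq_inv_iff_eq, vartheta_last]
    rw [hlast, isOrbit_iff_exists hstep hτ]
    simp only [image_castSucc_eq_iff]
    rw [image_succAbove_eq_iff]
    constructor
    · rintro ⟨O, hO, hω⟩
      by_cases haO : a ∈ O
      · right
        obtain ⟨z, rfl⟩ := hO
        rw [← hω]
        ext y
        have haz : τ.SameCycle z a := haO
        exact ⟨fun g => haz.trans g, fun g => haz.symm.trans g⟩
      · left
        refine ⟨O, hO, haO, ?_⟩
        rw [← image_succAbove_eq_iff, Set.diff_singleton_eq_self haO] at hω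
        exact hω
    · rintro (⟨O, hO, haO, hω⟩ | hω)
      · refine ⟨O, hO, ?_⟩
        rw [← image_succAbove_eq_iff, Set.diff_singleton_eq_self haO]
        exact hω
      · exact ⟨_, ⟨a, rfl⟩, hω⟩
  · have : {ω | IsOrbit σ ω} =
        (fun O : Set (Fin (k + 1 + 1)) => a.succAbove ⁻¹' O) '' {O | IsOrbit τ O} := by
      ext ω
      exact isOrbit_iff_exists hstep hτ ω
    rw [this, Set.ncard_image_of_injOn (preimage_injOn hτ)]
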